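/- (Asymptotic uniqueness of the ς-reduced representative along rays of direction (a11,a21).) Assume 0 ≤ a11 < a21, 0 ≤ a12 < a32, 0 ≤ a22 < a32, and fix integers m, n. Suppose that for every integer t ≥ 0 the matrix H(m+a11·t, n+a21·t) has characteristic polynomial irreducible over ℚ and has a non-real complex eigenvalue. Then there exists T such that for every integer t > T any two ς-reduced matrices integer conjugate to H(m+a11·t, n+a21·t) are equal; i.e., H(m+a11·t, n+a21·t) has exactly one integer conjugate ς-reduced matrix. -/

import Mathlib

/-- 3×3 integer matrices. -/
abbrev M3 : Type := Matrix (Fin 3) (Fin 3) ℤ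

/-- Hessenberg complexity ς(M) = a21² · a32. -/
def HessComplexity (M : M3) : ℤ := (M 1 0) ^ 2 * (M 2 1)

/-- A perfect (upper) Hessenberg matrix: a31 = 0, 0 ≤ a11 < a21, 0 ≤ a12 < a32,
0 ≤ a22 < a32. -/
def IsPerfectHessenberg (M : M3) : Prop :=
  M 2 0 = 0 ∧
  0 ≤ M 0 0 ∧ M 0 0 < M 1 0 ∧
  0 ≤ M 0 1 ∧ M 0 1 < M 2 1 ∧
  0 ≤ M 1 1 ∧ M 1 1 < M 2 1

/-- M₂ = X · M₁ · X⁻¹ for some X ∈ GL(3,ℤ). -/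
def IntegerConjugate (M₁ M₂ : M3) : Prop :=
  ∃ X : M3, (X.det = 1 ∨ X.det = -1) ∧ M₂ = X * M₁ * X⁻¹

/-- A ς-reduced matrix: a perfect Hessenberg SL(3,ℤ)-matrix whose Hessenberg
complexity is minimal in its integer conjugacy class. -/
def SigmaReduced (M : M3) : Prop :=
  M.det = 1 ∧ IsPerfectHessenberg M ∧
  ∀ M' : M3, M'.det = 1 → IsPerfectHessenberg M' → IntegerConjugate M M' →
    HessComplexity M ≤ HessComplexity M'

/-- The family H(m,n) of matrices of Hessenberg type ⟨a11,a21|a12,a22,a32⟩. -/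
def Hmat (a11 a12 a13 a21 a22 a23 a32 a33 m n : ℤ) : M3 :=
  !![a11, a12, a11 * m + a12 * n + a13;
     a21, a22, a21 * m + a22 * n + a23;
     0,   a32, a32 * n + a33]

/-!
Let `A` be a perfect Hessenberg matrix of determinant `1`, `D = ς(A)`, `e` the first basis vector.
If `Y M = A Y`, then `D • Y e = (a + b A + c A²) e` with integers `a, b, c`, and comparing Krylov
determinants gives `|det (a + b A + c A²)| = D² ς(M)`, which is at most `D³` if `ς(M) ≤ ς(A)`.
Let `r` be the real eigenvalue near the trace. When the trace is large compared with `D` and with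
the trace of the adjugate, `r` dominates, and the norm form is
`(a + b r + c r²) (u² + u w s + w² t)` with `u = a - c t`, `w = b + c s`, `r + s` the trace and
`r t = 1`. Replacing `Y` by `Aᵏ Y` multiplies the linear factor by `rᵏ`, so it can be assumed to lie
between `D` and `D r`; the bound on the norm then forces `c = 0` and `a b = 0`. Hence `Y e` or
`A⁻¹ Y e` is a multiple of `e`, and a perfect Hessenberg matrix is determined by its first basis
vector, so `M = A`. Along the ray `ς` and the trace of the adjugate are constant while the trace
tends to infinity.
-/

open Matrix

section Krylov

variable {n : ℕ} {R : Type*} [CommRing R]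

/-- The Krylov matrix of `A` and `v`, with columns `v, A v, …, Aⁿ⁻¹ v`. Its determinant, as a
function of `v`, is the Markov–Davenport form of `A`. -/
def krylov (A : Matrix (Fin n) (Fin n) R) (v : Fin n → R) : Matrix (Fin n) (Fin n) R :=
  Matrix.of fun i j => (A ^ (j : ℕ) *ᵥ v) i

theorem krylov_smul (A : Matrix (Fin n) (Fin n) R) (x : R) (v : Fin n → R) :
    krylov A (x • v) = x • krylov A v := by
  ext i j
  simp [krylov, mulVec_smul]

theorem krylov_mulVec_of_semiconjBy {A M P : Matrix (Fin n) (Fin n) R} (h : SemiconjBy P M A)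
    (v : Fin n → R) : krylov A (P *ᵥ v) = P * krylov M v := by
  ext i j
  change (A ^ (j : ℕ) *ᵥ (P *ᵥ v)) i = (P *ᵥ (M ^ (j : ℕ) *ᵥ v)) i
  rw [mulVec_mulVec, mulVec_mulVec, (h.pow_right j).eq]

theorem krylov_mulVec (A : Matrix (Fin n) (Fin n) R) (v g : Fin n → R) :
    krylov A v *ᵥ g = (∑ j, g j • A ^ (j : ℕ)) *ᵥ v := by
  rw [mulVec_eq_sum, sum_mulVec]
  exact Finset.sum_congr rfl fun j _ => by rw [op_smul_eq_smul, smul_mulVec]; rfl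

theorem exists_det_krylov_smul_eq (A : Matrix (Fin n) (Fin n) R) (w v : Fin n → R) :
    ∃ g : Fin n → R, (krylov A w).det • v = (∑ j, g j • A ^ (j : ℕ)) *ᵥ w :=
  ⟨(krylov A w).adjugate *ᵥ v, by
    rw [← krylov_mulVec, mulVec_mulVec, mul_adjugate, smul_mulVec, one_mulVec]⟩

theorem det_krylov_pow_mul_eq {A : Matrix (Fin n) (Fin n) R} {w v g : Fin n → R}
    (h : (krylov A w).det • v = (∑ j, g j • A ^ (j : ℕ)) *ᵥ w) :
    (krylov A w).det ^ n * (krylov A v).det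
      = (∑ j, g j • A ^ (j : ℕ)).det * (krylov A w).det := by
  have hcomm : Commute (∑ j, g j • A ^ (j : ℕ)) A :=
    Commute.sum_left _ _ _ fun j _ => ((Commute.refl A).pow_left j).smul_left (g j)
  rw [← det_mul, ← krylov_mulVec_of_semiconjBy hcomm, ← h, krylov_smul, det_smul, Fintype.card_fin]

end Krylov

section Eigenfunctional

variable {n : ℕ} {R K : Type*} [CommRing R] [Field K] [Algebra R K]
  {A : Matrix (Fin n) (Fin n) R} {f : (Fin n → R) →ₗ[R] K} {r : K}

theorem map_pow_mulVec (hf : ∀ v, f (A *ᵥ v) = r * f v) (k : ℕ) (v : Fin n → R) :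
    f (A ^ k *ᵥ v) = r ^ k * f v := by
  induction k generalizing v with
  | zero => simp
  | succ k ih => rw [pow_succ, ← mulVec_mulVec, ih, hf, pow_succ, mul_assoc]

theorem map_zpow_mulVec (hf : ∀ v, f (A *ᵥ v) = r * f v) (hA : IsUnit A.det) (hr : r ≠ 0)
    (k : ℤ) (v : Fin n → R) : f (A ^ k *ᵥ v) = r ^ k * f v := by
  obtain ⟨k, rfl | rfl⟩ := k.eq_nat_or_neg
  · simpa using map_pow_mulVec hf k v
  · have h := map_pow_mulVec hf k (A ^ (-k : ℤ) *ᵥ v)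
    rw [mulVec_mulVec, ← zpow_natCast, ← zpow_add hA, add_neg_cancel, zpow_zero, one_mulVec] at h
    rw [_root_.zpow_neg, h, zpow_natCast, inv_mul_cancel_left₀ (pow_ne_zero k hr)]

theorem map_sum_smul_pow_mulVec (hf : ∀ v, f (A *ᵥ v) = r * f v) (g v : Fin n → R) :
    f ((∑ j, g j • A ^ (j : ℕ)) *ᵥ v) = (∑ j, algebraMap R K (g j) * r ^ (j : ℕ)) * f v := by
  simp only [sum_mulVec, map_sum, smul_mulVec, map_smul, map_pow_mulVec hf, Finset.sum_mul]
  simp only [Algebra.smul_def, mul_assoc]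

theorem map_ne_zero_of_det_krylov_ne_zero (hf : ∀ v, f (A *ᵥ v) = r * f v) {v w : Fin n → R}
    (hw : f w ≠ 0) (hv : algebraMap R K (krylov A v).det ≠ 0) : f v ≠ 0 := by
  obtain ⟨g, hg⟩ := exists_det_krylov_smul_eq A v w
  have h := congrArg f hg
  rw [map_smul, map_sum_smul_pow_mulVec hf, Algebra.smul_def] at h
  exact right_ne_zero_of_mul (h ▸ mul_ne_zero hv hw)

end Eigenfunctional

section CubicNorm

theorem det_smul_one_add_smul_add_smul_sq {R : Type*} [CommRing R]
    (A : Matrix (Fin 3) (Fin 3) R) (a b c : R) :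
    (a • 1 + b • A + c • A ^ 2).det =
      a ^ 3 + a ^ 2 * b * A.trace + a ^ 2 * c * (A.trace ^ 2 - 2 * A.adjugate.trace)
        + a * b ^ 2 * A.adjugate.trace + a * b * c * (A.trace * A.adjugate.trace - 3 * A.det)
        + a * c ^ 2 * (A.adjugate.trace ^ 2 - 2 * A.trace * A.det)
        + A.det * (b ^ 3 + b ^ 2 * c * A.trace + b * c ^ 2 * A.adjugate.trace + c ^ 3 * A.det) := by
  simp only [det_fin_three, adjugate_fin_three, trace_fin_three, pow_two A, Matrix.mul_apply,
    Fin.sum_univ_three, Matrix.add_apply, Matrix.smul_apply, Matrix.one_apply, smul_eq_mul,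
    of_apply, cons_val, Fin.isValue, Fin.reduceEq, one_ne_zero, zero_ne_one, if_true, if_false,
    mul_one, mul_zero, zero_add]
  ring

theorem det_smul_one_add_smul_add_smul_sq_eq_mul {R S : Type*} [CommRing R] [CommRing S]
    (φ : R →+* S) {A : Matrix (Fin 3) (Fin 3) R} {r s t : S} (htrace : φ A.trace = r + s)
    (hadj : φ A.adjugate.trace = r * s + t) (hdet : φ A.det = r * t) (a b c : R) :
    φ (a • 1 + b • A + c • A ^ 2).det =
      (φ a + φ b * r + φ c * r ^ 2) *
        ((φ a - φ c * t) ^ 2 + (φ a - φ c * t) * (φ b + φ c * s) * s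
          + (φ b + φ c * s) ^ 2 * t) := by
  rw [det_smul_one_add_smul_add_smul_sq]
  simp only [map_add, map_sub, map_mul, map_pow, map_ofNat, htrace, hadj, hdet]
  ring

end CubicNorm

section Estimates

theorem exists_root_near_trace {p q : ℝ} (h : |q| + 1 ≤ p) :
    ∃ r : ℝ, p - 1 ≤ r ∧ r ^ 3 - p * r ^ 2 + q * r - 1 = 0 := by
  obtain ⟨hq₁, hq₂⟩ := abs_le.mp (le_sub_iff_add_le.mpr h)
  have hp : 0 ≤ p - 1 := (abs_nonneg q).trans (le_sub_iff_add_le.mpr h)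
  have hcont : ContinuousOn (fun x : ℝ => x ^ 3 - p * x ^ 2 + q * x - 1)
      (Set.Icc (p - 1) (p + 1)) := by fun_prop
  have hneg : (p - 1) ^ 3 - p * (p - 1) ^ 2 + q * (p - 1) - 1 ≤ 0 := by
    linear_combination mul_nonneg hp (sub_nonneg.mpr hq₂)
  have hpos : 0 ≤ (p + 1) ^ 3 - p * (p + 1) ^ 2 + q * (p + 1) - 1 := by
    nlinarith
  obtain ⟨r, hr, hroot⟩ := intermediate_value_Icc (by linarith) hcont ⟨hneg, hpos⟩
  exact ⟨r, hr.1, hroot⟩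

theorem exists_dominant_root_factorization {p q : ℝ} (h : (|q| + 1) ^ 2 + 1 ≤ p) :
    ∃ r s t : ℝ, p - 1 ≤ r ∧ t * r = 1 ∧ s ^ 2 ≤ t ∧ p = r + s ∧ q = r * s + t := by
  have hq : |q| + 1 ≤ (|q| + 1) ^ 2 := le_self_pow₀ (by linarith [abs_nonneg q]) two_ne_zero
  obtain ⟨r, hpr, hroot⟩ := exists_root_near_trace (by linarith : |q| + 1 ≤ p)
  have hr : 1 ≤ r := by linarith [abs_nonneg q]
  have hr₀ : 0 < r := by linarith
  have hrt : r⁻¹ * r = 1 := inv_mul_cancel₀ hr₀.ne'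
  have hrs : q = r * (p - r) + r⁻¹ :=
    mul_right_cancel₀ hr₀.ne' (by linear_combination hroot - hrt)
  refine ⟨r, p - r, r⁻¹, hpr, hrt, ?_, by ring, hrs⟩
  have hbound : (r * (p - r)) ^ 2 ≤ r := by
    have hle : |r * (p - r)| ≤ |q| + 1 := by
      rw [← sub_eq_of_eq_add hrs]
      refine (abs_sub _ _).trans (add_le_add_right ?_ _)
      rw [abs_of_pos (inv_pos.mpr hr₀)]
      exact inv_le_one_of_one_le₀ hr
    rw [← sq_abs]
    linarith [pow_le_pow_left₀ (abs_nonneg _) hle 2]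
  rw [← one_div, le_div_iff₀ hr₀]
  exact le_of_mul_le_mul_right (by linarith) hr₀

theorem half_le_sq_add_mul_add_sq {s t : ℝ} (h : s ^ 2 ≤ t) (u w : ℝ) :
    (u ^ 2 + w ^ 2 * t) / 2 ≤ u ^ 2 + u * w * s + w ^ 2 * t := by
  linear_combination (sq_nonneg (u + w * s) + mul_nonneg (sq_nonneg w) (sub_nonneg.mpr h)) / 2

theorem exists_zpow_mul_mem_Icc {r D x : ℝ} (hr : 1 < r) (hD : 0 < D) (hx : x ≠ 0) :
    ∃ k : ℤ, |r ^ k * x| ∈ Set.Icc D (D * r) := by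
  obtain ⟨k, hk₁, hk₂⟩ := exists_mem_Ico_zpow (div_pos (abs_pos.mpr hx) hD) hr
  have hpow : 0 < r ^ k := zpow_pos (by linarith) k
  rw [le_div_iff₀ hD] at hk₁
  rw [div_lt_iff₀ hD, zpow_add_one₀ (by linarith)] at hk₂
  refine ⟨-k, ?_, ?_⟩ <;>
    rw [abs_mul, _root_.zpow_neg, abs_of_pos (inv_pos.mpr hpow), inv_mul_eq_div]
  · rw [le_div_iff₀ hpow]; linarith
  · rw [div_le_iff₀ hpow]; linarith

variable {r s t D : ℝ}

theorem sq_le_and_sq_le_of_abs_mul_le {ℓ u w : ℝ} (hr : 0 < r) (ht : t * r = 1) (hs : s ^ 2 ≤ t)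
    (hD : 0 < D) (hℓ : D ≤ |ℓ|)
    (hnorm : |ℓ * (u ^ 2 + u * w * s + w ^ 2 * t)| ≤ D ^ 3) :
    u ^ 2 ≤ 2 * D ^ 2 ∧ w ^ 2 ≤ 2 * D ^ 2 * r := by
  have ht₀ : 0 ≤ t := (sq_nonneg s).trans hs
  have hQ := half_le_sq_add_mul_add_sq hs u w
  have hwt : 0 ≤ w ^ 2 * t := by positivity
  have hQD : u ^ 2 + u * w * s + w ^ 2 * t ≤ D ^ 2 := by
    have hQ₀ : 0 ≤ u ^ 2 + u * w * s + w ^ 2 * t := le_trans (by positivity) hQ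
    rw [abs_mul, abs_of_nonneg hQ₀] at hnorm
    refine le_of_mul_le_mul_left ?_ hD
    calc D * (u ^ 2 + u * w * s + w ^ 2 * t) ≤ |ℓ| * (u ^ 2 + u * w * s + w ^ 2 * t) := by gcongr
      _ ≤ D * D ^ 2 := by linarith
  refine ⟨by linarith, ?_⟩
  calc w ^ 2 = w ^ 2 * t * r := by rw [mul_assoc, ht, mul_one]
    _ ≤ 2 * D ^ 2 * r := mul_le_mul_of_nonneg_right (by linarith [sq_nonneg u]) hr.le

variable {a b c : ℤ}

theorem quadraticCoeff_eq_zero_of_abs_norm_le (ht : t * r = 1) (hs : s ^ 2 ≤ t) (hD : 1 ≤ D)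
    (hr : 16 * D ^ 3 ≤ r)
    (hℓ : |(a + b * r + c * r ^ 2 : ℝ)| ∈ Set.Icc D (D * r))
    (hnorm : |(a + b * r + c * r ^ 2) *
      ((a - c * t) ^ 2 + (a - c * t) * (b + c * s) * s + (b + c * s) ^ 2 * t)| ≤ D ^ 3) :
    c = 0 := by
  have hD₂ : D ≤ D ^ 2 := le_self_pow₀ hD two_ne_zero
  have hD₃ : D ^ 2 ≤ D ^ 3 := pow_le_pow_right₀ hD (by norm_num)
  have hr₀ : 0 < r := by linarith
  obtain ⟨hu, hw⟩ := sq_le_and_sq_le_of_abs_mul_le hr₀ ht hs (by linarith) hℓ.1 hnorm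
  have ht₁ : t ≤ 1 := by nlinarith
  have hs₁ : s ≤ 1 := le_of_sq_le_sq (by linarith) zero_le_one
  have hu' : |(a - c * t : ℝ)| ≤ 2 * D := abs_le_of_sq_le_sq (by nlinarith) (by linarith)
  by_contra hc
  have hc₁ : (1 : ℝ) ≤ |(c : ℝ)| := by exact_mod_cast Int.one_le_abs hc
  have hlower : r ^ 2 - r ≤ |c * (r ^ 2 - r * s + t)| := by
    rw [abs_mul]
    have hle : r ^ 2 - r ≤ |r ^ 2 - r * s + t| := le_trans (by nlinarith) (le_abs_self _)
    nlinarith [abs_nonneg (r ^ 2 - r * s + t)]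
  have hupper : |c * (r ^ 2 - r * s + t)| ≤ D * r + 2 * D + r * |(b + c * s : ℝ)| := by
    calc |c * (r ^ 2 - r * s + t)|
        = |(a + b * r + c * r ^ 2) - (a - c * t) - r * (b + c * s)| := by ring_nf
      _ ≤ |(a + b * r + c * r ^ 2 : ℝ)| + |(a - c * t : ℝ)| + |r * (b + c * s)| :=
        (abs_sub _ _).trans (add_le_add_left (abs_sub _ _) _)
      _ ≤ D * r + 2 * D + r * |(b + c * s : ℝ)| := by
        rw [abs_mul r, abs_of_pos hr₀]
        gcongr
        exact hℓ.2
  have hw' : r / 2 ≤ |(b + c * s : ℝ)| := by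
    refine le_of_mul_le_mul_left ?_ hr₀
    nlinarith
  have hr_sq : (r / 2) ^ 2 ≤ 2 * D ^ 2 * r :=
    (sq_le_sq' (by linarith [abs_nonneg (b + c * s : ℝ)]) hw').trans (by rwa [sq_abs])
  nlinarith

theorem constCoeff_eq_zero_or_linearCoeff_eq_zero_of_abs_norm_le (ht : t * r = 1)
    (hs : s ^ 2 ≤ t) (hD : 1 ≤ D) (hr : 16 * D ^ 3 ≤ r) (hℓ : D ≤ |(a + b * r : ℝ)|)
    (hnorm : |(a + b * r : ℝ) * (a ^ 2 + a * b * s + b ^ 2 * t)| ≤ D ^ 3) :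
    a = 0 ∨ b = 0 := by
  have hD₂ : D ≤ D ^ 2 := le_self_pow₀ hD two_ne_zero
  have hD₃ : D ^ 2 ≤ D ^ 3 := pow_le_pow_right₀ hD (by norm_num)
  have hr₀ : 0 < r := by linarith
  have ht₀ : 0 ≤ t := (sq_nonneg s).trans hs
  have ha : |(a : ℝ)| ≤ 2 * D :=
    abs_le_of_sq_le_sq
      (by nlinarith [(sq_le_and_sq_le_of_abs_mul_le hr₀ ht hs (by linarith) hℓ hnorm).1])
      (by linarith)
  by_contra! hab
  have ha₁ : (1 : ℝ) ≤ |(a : ℝ)| := by exact_mod_cast Int.one_le_abs hab.1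
  have hb₁ : (1 : ℝ) ≤ |(b : ℝ)| := by exact_mod_cast Int.one_le_abs hab.2
  have hlinear : r - 2 * D ≤ |(a + b * r : ℝ)| := by
    have htriangle := abs_sub_abs_le_abs_add (b * r : ℝ) a
    rw [abs_mul, abs_of_pos hr₀, add_comm] at htriangle
    nlinarith
  have hquadratic : 1 / 2 ≤ (a ^ 2 + a * b * s + b ^ 2 * t : ℝ) := by
    have hbt : (0 : ℝ) ≤ b ^ 2 * t := by positivity
    have ha₂ : (1 : ℝ) ≤ a ^ 2 := by rw [← sq_abs]; exact one_le_pow₀ ha₁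
    linarith [half_le_sq_add_mul_add_sq hs (a : ℝ) b]
  rw [abs_mul, abs_of_pos (by linarith : (0 : ℝ) < a ^ 2 + a * b * s + b ^ 2 * t)] at hnorm
  have hr_le : (r - 2 * D) * (1 / 2) ≤ D ^ 3 :=
    (mul_le_mul hlinear hquadratic (by norm_num) (abs_nonneg _)).trans hnorm
  linarith

end Estimates

section Conjugation

/-- `Y` is an invertible matrix conjugating `M` to `A`, written without inverses as `Y M = A Y`. -/
def IsConjugator {n : ℕ} {R : Type*} [CommRing R] (A M Y : Matrix (Fin n) (Fin n) R) : Prop :=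
  IsUnit Y.det ∧ SemiconjBy Y M A

theorem IsConjugator.zpow_mul {n : ℕ} {R : Type*} [CommRing R] {A M Y : Matrix (Fin n) (Fin n) R}
    (h : IsConjugator A M Y) (hA : IsUnit A.det) (k : ℤ) : IsConjugator A M (A ^ k * Y) :=
  ⟨by rw [det_mul]; exact (hA.det_zpow k).mul h.1,
    SemiconjBy.mul_left (Matrix.Commute.zpow_self A k) h.2⟩

theorem IsConjugator.neg {n : ℕ} {R : Type*} [CommRing R] {A M Y : Matrix (Fin n) (Fin n) R}
    (h : IsConjugator A M Y) : IsConjugator A M (-Y) :=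
  ⟨by rw [det_neg]; exact (isUnit_neg_one.pow _).mul h.1, h.2.neg_left⟩

namespace IntegerConjugate

theorem refl (A : M3) : IntegerConjugate A A := ⟨1, by simp, by simp⟩

theorem symm {A M : M3} (h : IntegerConjugate A M) : IntegerConjugate M A := by
  obtain ⟨X, hX, rfl⟩ := h
  have hunit : IsUnit X.det := Int.isUnit_iff.mpr hX
  refine ⟨X⁻¹, Int.isUnit_iff.mp (isUnit_nonsing_inv_det_iff.mpr hunit), ?_⟩
  rw [nonsing_inv_nonsing_inv X hunit, ← mul_assoc, ← mul_assoc, nonsing_inv_mul X hunit, one_mul,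
    nonsing_inv_mul_cancel_right X A hunit]

theorem exists_isConjugator {A M : M3} (h : IntegerConjugate A M) : ∃ Y, IsConjugator A M Y := by
  obtain ⟨X, hX, rfl⟩ := h
  have hunit : IsUnit X.det := Int.isUnit_iff.mpr hX
  refine ⟨X⁻¹, isUnit_nonsing_inv_det_iff.mpr hunit, ?_⟩
  rw [SemiconjBy, ← mul_assoc, ← mul_assoc, nonsing_inv_mul X hunit, one_mul]

end IntegerConjugate

end Conjugation

section Hessenberg

theorem eq_zero_of_eq_add_mul {x z p k : ℤ} (hx : 0 ≤ x) (hxp : x < p) (hz : 0 ≤ z) (hzp : z < p)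
    (h : x = z + p * k) : k = 0 := by
  rw [← ((Int.ediv_emod_unique (hz.trans_lt hzp)).mpr ⟨h.symm, hz, hzp⟩).1,
    Int.ediv_eq_zero_of_lt hx hxp]

theorem eq_and_eq_one_of_eq_mul_isUnit {x z e : ℤ} (hx : 0 < x) (hz : 0 < z) (he : IsUnit e)
    (h : x = e * z) : x = z ∧ e = 1 := by
  rcases Int.isUnit_iff.mp he with rfl | rfl <;> omega

theorem det_krylov_single_of_hessenberg {M : M3} (h : M 2 0 = 0) :
    (krylov M (Pi.single 0 1)).det = HessComplexity M := by
  have hcol : ∀ i j, krylov M (Pi.single 0 1) i j = (M ^ (j : ℕ)) i 0 := fun i j => by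
    simp [krylov]
  simp only [det_fin_three, hcol, HessComplexity, Fin.val_zero, Fin.val_one, Fin.val_two,
    pow_zero, pow_one, pow_two M, Matrix.mul_apply, Fin.sum_univ_three, h, one_apply_eq,
    Matrix.one_apply_ne (one_ne_zero : (1 : Fin 3) ≠ 0),
    Matrix.one_apply_ne (by decide : (2 : Fin 3) ≠ 0)]
  ring

theorem exists_eigenfunctional_of_hessenberg {A : M3} {r : ℝ} (h20 : A 2 0 = 0)
    (h10 : A 1 0 ≠ 0) (h21 : A 2 1 ≠ 0)
    (hr : r ^ 3 - A.trace * r ^ 2 + A.adjugate.trace * r - A.det = 0) :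
    ∃ f : (Fin 3 → ℤ) →ₗ[ℤ] ℝ, (∀ v, f (A *ᵥ v) = r * f v) ∧ f (Pi.single 0 1) ≠ 0 := by
  -- `ξ` is the last row of the adjugate of `r - A`.
  let ξ : Fin 3 → ℝ := ![A 1 0 * A 2 1, A 2 1 * (r - A 0 0),
    (r - A 0 0) * (r - A 1 1) - A 0 1 * A 1 0]
  refine ⟨Fintype.linearCombination ℤ ξ, fun v => ?_, ?_⟩
  · simp only [det_fin_three, adjugate_fin_three, trace_fin_three, h20, of_apply, cons_val] at hr
    push_cast at hr
    simp only [Fintype.linearCombination_apply, mulVec, dotProduct, Fin.sum_univ_three, h20, ξ,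
      cons_val, zsmul_eq_mul]
    push_cast
    linear_combination (-(v 2 : ℝ)) * hr
  · simp [Fintype.linearCombination_apply, Fin.sum_univ_three, ξ, h10, h21]

section Conjugator

variable {A M Y : M3}

theorem IsConjugator.abs_det_krylov_mulVec_single (hY : IsConjugator A M Y) (hM : M 2 0 = 0) :
    |(krylov A (Y *ᵥ Pi.single 0 1)).det| = |HessComplexity M| := by
  rw [krylov_mulVec_of_semiconjBy hY.2, det_mul, det_krylov_single_of_hessenberg hM, abs_mul,
    Int.isUnit_iff_abs_eq.mp hY.1, one_mul]

theorem IsConjugator.exists_smul_mulVec_single_eq (hY : IsConjugator A M Y) (hA : A 2 0 = 0)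
    (hM : M 2 0 = 0) (hς : HessComplexity A ≠ 0) :
    ∃ a b c : ℤ,
      HessComplexity A • (Y *ᵥ Pi.single 0 1) = (a • 1 + b • A + c • A ^ 2) *ᵥ Pi.single 0 1 ∧
      |(a • 1 + b • A + c • A ^ 2).det| = HessComplexity A ^ 2 * |HessComplexity M| := by
  obtain ⟨g, hg⟩ := exists_det_krylov_smul_eq A (Pi.single 0 1) (Y *ᵥ Pi.single 0 1)
  have hnorm := det_krylov_pow_mul_eq hg
  rw [det_krylov_single_of_hessenberg hA] at hg hnorm
  simp only [Fin.sum_univ_three, Fin.val_zero, Fin.val_one, Fin.val_two, pow_zero, pow_one]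
    at hg hnorm
  refine ⟨g 0, g 1, g 2, hg, ?_⟩
  rw [← hY.abs_det_krylov_mulVec_single hM, ← abs_of_nonneg (sq_nonneg (HessComplexity A)),
    ← abs_mul]
  exact congrArg abs (mul_right_cancel₀ hς (by linear_combination -hnorm))

end Conjugator

namespace IsPerfectHessenberg

variable {A M Y : M3}

theorem hessComplexity_pos (hA : IsPerfectHessenberg A) : 0 < HessComplexity A := by
  obtain ⟨-, h00, h10, h01, h21, -⟩ := hA
  exact mul_pos (pow_pos (h00.trans_lt h10) 2) (h01.trans_lt h21)

theorem conjugator_eq_one (hA : IsPerfectHessenberg A) (hM : IsPerfectHessenberg M)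
    (hY : IsConjugator A M Y) (h00 : Y 0 0 = 1) (h10 : Y 1 0 = 0) (h20 : Y 2 0 = 0) : Y = 1 := by
  obtain ⟨a20, a00, a00', a01, a01', a11, a11'⟩ := hA
  obtain ⟨m20, m00, m00', m01, m01', m11, m11'⟩ := hM
  have entry (i j : Fin 3) : Y i 0 * M 0 j + Y i 1 * M 1 j + Y i 2 * M 2 j
      = A i 0 * Y 0 j + A i 1 * Y 1 j + A i 2 * Y 2 j := by
    simpa only [Matrix.mul_apply, Fin.sum_univ_three] using congrFun₂ hY.2.eq i j
  have e00 := entry 0 0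
  have e10 := entry 1 0
  have e20 := entry 2 0
  simp only [h00, h10, h20, a20, m20, mul_one, one_mul, mul_zero, zero_mul, add_zero, zero_add,
    mul_eq_zero] at e00 e10 e20
  have h21 : Y 2 1 = 0 := e20.resolve_right (by omega)
  have hdiag : IsUnit (Y 1 1) ∧ IsUnit (Y 2 2) := by
    have hdet : Y.det = Y 1 1 * Y 2 2 := by
      rw [det_fin_three, h00, h10, h20, h21]; ring
    exact IsUnit.mul_iff.mp (hdet ▸ hY.1)
  obtain ⟨ham10, h11⟩ := eq_and_eq_one_of_eq_mul_isUnit (by omega) (by omega) hdiag.1 e10.symm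
  have h01 : Y 0 1 = 0 :=
    eq_zero_of_eq_add_mul a00 (ham10 ▸ a00') m00 m00' (by linear_combination -e00)
  have e01 := entry 0 1
  have e11 := entry 1 1
  have e21 := entry 2 1
  simp only [h00, h10, h20, h01, h11, h21, mul_one, one_mul, mul_zero, zero_mul, add_zero,
    zero_add] at e01 e11 e21
  obtain ⟨ham21, h22⟩ := eq_and_eq_one_of_eq_mul_isUnit (by omega) (by omega) hdiag.2 e21.symm
  have h02 : Y 0 2 = 0 :=
    eq_zero_of_eq_add_mul a01 (ham21 ▸ a01') m01 m01' (by linear_combination -e01)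
  have h12 : Y 1 2 = 0 :=
    eq_zero_of_eq_add_mul a11 (ham21 ▸ a11') m11 m11' (by linear_combination -e11)
  ext i j
  fin_cases i <;> fin_cases j <;> simp [*]

theorem eq_of_conjugator_col (hA : IsPerfectHessenberg A) (hM : IsPerfectHessenberg M)
    (hY : IsConjugator A M Y) (h10 : Y 1 0 = 0) (h20 : Y 2 0 = 0) : M = A := by
  have hunit : IsUnit (Y 0 0) := by
    have hdet : Y.det = Y 0 0 * (Y 1 1 * Y 2 2 - Y 1 2 * Y 2 1) := by
      rw [det_fin_three, h10, h20]; ring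
    exact isUnit_of_mul_isUnit_left (hdet ▸ hY.1)
  obtain ⟨Z, hZ, rfl⟩ : ∃ Z, IsConjugator A M Z ∧ Z = 1 := by
    rcases Int.isUnit_iff.mp hunit with h00 | h00
    · exact ⟨Y, hY, conjugator_eq_one hA hM hY h00 h10 h20⟩
    · exact ⟨-Y, hY.neg, conjugator_eq_one hA hM hY.neg (by simp [h00]) (by simp [h10])
        (by simp [h20])⟩
  simpa [SemiconjBy] using hZ.2

theorem eq_of_smul_conjugator_single (hA : IsPerfectHessenberg A) (hM : IsPerfectHessenberg M)
    (hY : IsConjugator A M Y) {x z : ℤ} (hx : x ≠ 0)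
    (h : x • (Y *ᵥ Pi.single 0 1) = z • Pi.single 0 1) : M = A := by
  have hcol (i : Fin 3) (hi : i ≠ 0) : Y i 0 = 0 := by
    simpa [hx, hi] using congrFun h i
  exact hA.eq_of_conjugator_col hM hY (hcol 1 (by decide)) (hcol 2 (by decide))

theorem exists_conjugator_coeffs (hA : IsPerfectHessenberg A) (hM : IsPerfectHessenberg M)
    (hdet : A.det = 1) (hconj : IntegerConjugate A M) {r : ℝ} (hr₁ : 1 < r)
    (hr : r ^ 3 - A.trace * r ^ 2 + A.adjugate.trace * r - 1 = 0) :
    ∃ (Y : M3) (a b c : ℤ), IsConjugator A M Y ∧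
      HessComplexity A • (Y *ᵥ Pi.single 0 1) = (a • 1 + b • A + c • A ^ 2) *ᵥ Pi.single 0 1 ∧
      |(a • 1 + b • A + c • A ^ 2).det| = HessComplexity A ^ 2 * HessComplexity M ∧
      |(a + b * r + c * r ^ 2 : ℝ)|
        ∈ Set.Icc (HessComplexity A : ℝ) (HessComplexity A * r) := by
  have hunit : IsUnit A.det := hdet ▸ isUnit_one
  have hςA := hA.hessComplexity_pos
  have hςM := hM.hessComplexity_pos
  obtain ⟨Y, hY⟩ := hconj.exists_isConjugator
  obtain ⟨f, hf, hf₀⟩ := exists_eigenfunctional_of_hessenberg hA.1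
    (hA.2.1.trans_lt hA.2.2.1).ne' (hA.2.2.2.1.trans_lt hA.2.2.2.2.1).ne' (r := r)
    (by rw [hdet, Int.cast_one]; exact hr)
  have hfY : f (Y *ᵥ Pi.single 0 1) ≠ 0 := by
    refine map_ne_zero_of_det_krylov_ne_zero hf hf₀ ?_
    rw [algebraMap_int_eq, eq_intCast, Int.cast_ne_zero, ← abs_pos,
      hY.abs_det_krylov_mulVec_single hM.1]
    exact abs_pos.mpr hςM.ne'
  obtain ⟨k, hk⟩ := exists_zpow_mul_mem_Icc hr₁ (Int.cast_pos.mpr hςA)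
    (div_ne_zero (mul_ne_zero (Int.cast_ne_zero.mpr hςA.ne') hfY) hf₀)
  have hYk := hY.zpow_mul hunit k
  obtain ⟨a, b, c, hcol, hnorm⟩ := hYk.exists_smul_mulVec_single_eq hA.1 hM.1 hςA.ne'
  rw [abs_of_pos hςM] at hnorm
  refine ⟨_, a, b, c, hYk, hcol, hnorm, ?_⟩
  have hquad := map_sum_smul_pow_mulVec hf ![a, b, c] (Pi.single 0 1)
  simp only [Fin.sum_univ_three, cons_val, Fin.val_zero, Fin.val_one, Fin.val_two, pow_zero,
    pow_one, mul_one, algebraMap_int_eq, eq_intCast] at hquad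
  rw [← hcol, map_smul, ← mulVec_mulVec, map_zpow_mulVec hf hunit (by positivity),
    zsmul_eq_mul] at hquad
  convert hk using 2
  rw [← mul_div_assoc, eq_div_iff hf₀, ← hquad]
  ring

theorem eq_of_integerConjugate_of_hessComplexity_le (hA : IsPerfectHessenberg A)
    (hM : IsPerfectHessenberg M) (hdet : A.det = 1)
    (htr : 16 * HessComplexity A ^ 3 + (|A.adjugate.trace| + 1) ^ 2 + 1 ≤ A.trace)
    (hconj : IntegerConjugate A M) (hle : HessComplexity M ≤ HessComplexity A) : M = A := by
  have hς : (1 : ℝ) ≤ HessComplexity A := by exact_mod_cast hA.hessComplexity_pos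
  have hς₃ : (1 : ℝ) ≤ HessComplexity A ^ 3 := one_le_pow₀ hς
  have htr' : (16 * HessComplexity A ^ 3 + (|(A.adjugate.trace : ℝ)| + 1) ^ 2 + 1 : ℝ)
      ≤ A.trace := by exact_mod_cast htr
  obtain ⟨r, s, t, hpr, ht, hs, htrace, hadj⟩ := exists_dominant_root_factorization
    (by linarith : (|(A.adjugate.trace : ℝ)| + 1) ^ 2 + 1 ≤ A.trace)
  have hr : (16 * HessComplexity A ^ 3 : ℝ) ≤ r := by
    linarith [sq_nonneg (|(A.adjugate.trace : ℝ)| + 1)]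
  obtain ⟨Y, a, b, c, hY, hcol, habs, hℓ⟩ := hA.exists_conjugator_coeffs hM hdet hconj
    (r := r) (by linarith) (by rw [htrace, hadj]; linear_combination ht)
  have hnorm : |(a + b * r + c * r ^ 2) *
      ((a - c * t) ^ 2 + (a - c * t) * (b + c * s) * s + (b + c * s) ^ 2 * t)|
        ≤ (HessComplexity A : ℝ) ^ 3 := by
    have hfactor := det_smul_one_add_smul_add_smul_sq_eq_mul (Int.castRingHom ℝ) htrace hadj
      (by rw [hdet, map_one, mul_comm, ht]) a b c
    simp only [eq_intCast] at hfactor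
    rw [← hfactor, ← Int.cast_abs, habs]
    exact_mod_cast (mul_le_mul_of_nonneg_left hle (sq_nonneg _)).trans_eq (pow_succ _ 2).symm
  obtain rfl : c = 0 := quadraticCoeff_eq_zero_of_abs_norm_le ht hs hς hr hℓ hnorm
  simp only [Int.cast_zero, zero_mul, add_zero, sub_zero, zero_smul] at hcol hℓ hnorm
  rcases constCoeff_eq_zero_or_linearCoeff_eq_zero_of_abs_norm_le ht hs hς hr hℓ.1 hnorm
    with rfl | rfl
  · have hunit : IsUnit A.det := hdet ▸ isUnit_one
    refine hA.eq_of_smul_conjugator_single hM (hY.zpow_mul hunit (-1)) (z := b)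
      hA.hessComplexity_pos.ne' ?_
    rw [Matrix.zpow_neg_one, ← mulVec_mulVec, ← mulVec_smul, hcol, zero_smul, zero_add, smul_mulVec,
      mulVec_smul, mulVec_mulVec, nonsing_inv_mul A hunit, one_mulVec]
  · refine hA.eq_of_smul_conjugator_single hM hY (z := a) hA.hessComplexity_pos.ne' ?_
    rw [hcol, zero_smul, add_zero, smul_mulVec, one_mulVec]

theorem integerConjugate_and_sigmaReduced_iff_eq (hA : IsPerfectHessenberg A) (hdet : A.det = 1)
    (htr : 16 * HessComplexity A ^ 3 + (|A.adjugate.trace| + 1) ^ 2 + 1 ≤ A.trace) (M : M3) :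
    (IntegerConjugate A M ∧ SigmaReduced M) ↔ M = A := by
  constructor
  · rintro ⟨hconj, -, hM, hmin⟩
    exact hA.eq_of_integerConjugate_of_hessComplexity_le hM hdet htr hconj
      (hmin A hdet hA hconj.symm)
  · rintro rfl
    refine ⟨.refl M, hdet, hA, fun M' _ hM' hconj => ?_⟩
    by_contra! hlt
    rw [hA.eq_of_integerConjugate_of_hessComplexity_le hM' hdet htr hconj hlt.le] at hlt
    exact hlt.false

end IsPerfectHessenberg

end Hessenberg

section Ray

variable (a11 a12 a13 a21 a22 a23 a32 a33 m n t : ℤ)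

theorem hessComplexity_hmat :
    HessComplexity (Hmat a11 a12 a13 a21 a22 a23 a32 a33 m n) = a21 ^ 2 * a32 := by
  simp [HessComplexity, Hmat]

theorem det_hmat : (Hmat a11 a12 a13 a21 a22 a23 a32 a33 m n).det =
    (Hmat a11 a12 a13 a21 a22 a23 a32 a33 0 0).det := by
  simp only [Hmat, det_fin_three, of_apply, cons_val]
  ring

theorem trace_hmat_ray :
    (Hmat a11 a12 a13 a21 a22 a23 a32 a33 (m + a11 * t) (n + a21 * t)).trace =
      (Hmat a11 a12 a13 a21 a22 a23 a32 a33 m n).trace + a21 * a32 * t := by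
  simp only [Hmat, trace_fin_three, of_apply, cons_val]
  ring

theorem trace_adjugate_hmat_ray :
    (Hmat a11 a12 a13 a21 a22 a23 a32 a33 (m + a11 * t) (n + a21 * t)).adjugate.trace =
      (Hmat a11 a12 a13 a21 a22 a23 a32 a33 m n).adjugate.trace := by
  simp only [Hmat, adjugate_fin_three, trace_fin_three, of_apply, cons_val]
  ring

end Ray

theorem asymptotic_sigma_uniqueness_dir_a11_a21_general
    (a11 a12 a13 a21 a22 a23 a32 a33 m n : ℤ)
    (hdet : (Hmat a11 a12 a13 a21 a22 a23 a32 a33 0 0).det = 1)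
    (h11 : 0 ≤ a11) (h1121 : a11 < a21)
    (h12 : 0 ≤ a12) (h1232 : a12 < a32)
    (h22 : 0 ≤ a22) (h2232 : a22 < a32) :
    ∃ T : ℤ, ∀ t : ℤ, T < t → ∀ M' : M3,
      (IntegerConjugate (Hmat a11 a12 a13 a21 a22 a23 a32 a33 (m + a11 * t) (n + a21 * t)) M' ∧
        SigmaReduced M') ↔
      M' = Hmat a11 a12 a13 a21 a22 a23 a32 a33 (m + a11 * t) (n + a21 * t) := by
  let H := Hmat a11 a12 a13 a21 a22 a23 a32 a33 m n
  let B := 16 * (a21 ^ 2 * a32) ^ 3 + (|H.adjugate.trace| + 1) ^ 2 + 1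
  refine ⟨max 0 (B - H.trace), fun t ht => ?_⟩
  obtain ⟨ht₀, hBt⟩ := max_lt_iff.mp ht
  refine IsPerfectHessenberg.integerConjugate_and_sigmaReduced_iff_eq
    ⟨rfl, h11, h1121, h12, h1232, h22, h2232⟩ ((det_hmat ..).trans hdet) ?_
  have hslope : 1 ≤ a21 * a32 := one_le_mul_of_one_le_of_one_le (by omega) (by omega)
  rw [hessComplexity_hmat, trace_adjugate_hmat_ray, trace_hmat_ray]
  change B ≤ H.trace + a21 * a32 * t
  linarith [le_mul_of_one_le_left ht₀.le hslope]

/-- Along any NRS-ray of direction (a11,a21), eventually every matrix of the ray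
has exactly one integer conjugate ς-reduced matrix. -/
theorem asymptotic_sigma_uniqueness_dir_a11_a21
    (a11 a12 a13 a21 a22 a23 a32 a33 m n : ℤ)
    (hdet : (Hmat a11 a12 a13 a21 a22 a23 a32 a33 0 0).det = 1)
    (h11 : 0 ≤ a11) (h1121 : a11 < a21)
    (h12 : 0 ≤ a12) (h1232 : a12 < a32)
    (h22 : 0 ≤ a22) (h2232 : a22 < a32)
    (hray : ∀ t : ℤ, 0 ≤ t →
      Irreducible
        ((Hmat a11 a12 a13 a21 a22 a23 a32 a33 (m + a11 * t) (n + a21 * t)).charpoly.map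
          (Int.castRingHom ℚ)) ∧
      ∃ z : ℂ, z.im ≠ 0 ∧
        Polynomial.aeval z
          (Hmat a11 a12 a13 a21 a22 a23 a32 a33 (m + a11 * t) (n + a21 * t)).charpoly = 0) :
    ∃ T : ℤ, ∀ t : ℤ, T < t →
      ∃! M' : M3,
        IntegerConjugate (Hmat a11 a12 a13 a21 a22 a23 a32 a33 (m + a11 * t) (n + a21 * t)) M' ∧
        SigmaReduced M' := by
  obtain ⟨T, hT⟩ := asymptotic_sigma_uniqueness_dir_a11_a21_general
    a11 a12 a13 a21 a22 a23 a32 a33 m n hdet h11 h1121 h12 h1232 h22 h2232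
  exact ⟨T, fun t ht => ⟨_, (hT t ht _).2 rfl, fun M' => (hT t ht M').1⟩⟩
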